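/- Let V be a simple b-module and suppose there exists t ∈ ℤ_+ such that (a) the action of L_t on V is injective, and (b) L_i V = 0 for all integers i > t. Then for every ℓ ∈ ℂ, the induced module Ind_ℓ(V) is a simple N-module. -/

import Mathlib

/-- A module over the Neveu–Schwarz algebra. `L m` is the action of `L_m`,
`G j` is the action of `G_{j - 1/2”}`, `C` is the action of the central element `c`. -/
structure NSRep : Type 1 where
  carrier : Type
  [isAddCommGroup : AddCommGroup carrier]
  [isModule : Module ℂ carrier]
  L : ℤ → carrier →ₗ[ℂ] carrier
  G : ℤ → carrier →ₗ[ℂ] carrier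
  C : carrier →ₗ[ℂ] carrier
  commC_L : ∀ (m : ℤ) (v : carrier), C (L m v) = L m (C v)
  commC_G : ∀ (j : ℤ) (v : carrier), C (G j v) = G j (C v)
  rel_LL : ∀ (m n : ℤ) (v : carrier),
    L m (L n v) - L n (L m v)
      = ((m : ℂ) - n) • L (m + n) v
        + (if m + n = 0 then ((m : ℂ) ^ 3 - m) / 12 else 0) • C v
  rel_LG : ∀ (m j : ℤ) (v : carrier),
    L m (G j v) - G j (L m v) = (((m : ℂ) - 2 * j + 1) / 2) • G (m + j) v
  rel_GG : ∀ (j k : ℤ) (v : carrier),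
    G j (G k v) + G k (G j v)
      = (2 : ℂ) • L (j + k - 1) v
        + (if j + k = 1 then ((j : ℂ) ^ 2 - j) / 3 else 0) • C v

attribute [instance] NSRep.isAddCommGroup NSRep.isModule

def NSRep.Invariant (M : NSRep) (p : Submodule ℂ M.carrier) : Prop :=
  (∀ (m : ℤ), ∀ v ∈ p, M.L m v ∈ p) ∧ (∀ (j : ℤ), ∀ v ∈ p, M.G j v ∈ p) ∧
    (∀ v ∈ p, M.C v ∈ p)

def NSRep.IsSimple (M : NSRep) : Prop :=
  (∃ v : M.carrier, v ≠ 0) ∧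
    ∀ p : Submodule ℂ M.carrier, M.Invariant p → p = ⊥ ∨ p = ⊤

def NSRep.IsRestricted (M : NSRep) : Prop :=
  ∀ v : M.carrier, ∃ N : ℤ, ∀ i : ℤ, N ≤ i → M.L i v = 0 ∧ M.G i v = 0

def NSRep.HasCentralCharge (M : NSRep) (ℓ : ℂ) : Prop :=
  ∀ v : M.carrier, M.C v = ℓ • v

/-- A module over the subalgebra `b = ⊕_{i ≥ 0} ℂ L_i ⊕ ⊕_{i ≥ 1} ℂ G_{i-1/2}`.
`L i` is the action of `L_i` and `G j` is the action of `G_{j + 1/2}`. -/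
structure BRep : Type 1 where
  carrier : Type
  [isAddCommGroup : AddCommGroup carrier]
  [isModule : Module ℂ carrier]
  L : ℕ → carrier →ₗ[ℂ] carrier
  G : ℕ → carrier →ₗ[ℂ] carrier
  rel_LL : ∀ (m n : ℕ) (v : carrier),
    L m (L n v) - L n (L m v) = ((m : ℂ) - n) • L (m + n) v
  rel_LG : ∀ (m j : ℕ) (v : carrier),
    L m (G j v) - G j (L m v) = (((m : ℂ) - 2 * j - 1) / 2) • G (m + j) v
  rel_GG : ∀ (j k : ℕ) (v : carrier),
    G j (G k v) + G k (G j v) = (2 : ℂ) • L (j + k + 1) v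

attribute [instance] BRep.isAddCommGroup BRep.isModule

def BRep.Invariant (V : BRep) (p : Submodule ℂ V.carrier) : Prop :=
  (∀ (i : ℕ), ∀ v ∈ p, V.L i v ∈ p) ∧ (∀ (j : ℕ), ∀ v ∈ p, V.G j v ∈ p)

def BRep.IsSimple (V : BRep) : Prop :=
  (∃ v : V.carrier, v ≠ 0) ∧
    ∀ p : Submodule ℂ V.carrier, V.Invariant p → p = ⊥ ∨ p = ⊤

/-- `ι` is a homomorphism of `b`-modules from the `b`-module `V` to the restriction
of the Neveu–Schwarz module `M` to `b` (under which `BRep.G j = G_{j+1/2}`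
corresponds to `NSRep.G (j+1)`). -/
def IsBLinear (V : BRep) (M : NSRep) (ι : V.carrier →ₗ[ℂ] M.carrier) : Prop :=
  (∀ (i : ℕ) (v : V.carrier), ι (V.L i v) = M.L (i : ℤ) (ι v)) ∧
    (∀ (j : ℕ) (v : V.carrier), ι (V.G j v) = M.G ((j : ℤ) + 1) (ι v))

def IsNSHom (M W : NSRep) (F : M.carrier →ₗ[ℂ] W.carrier) : Prop :=
  (∀ (m : ℤ) (v : M.carrier), F (M.L m v) = W.L m (F v)) ∧
    (∀ (j : ℤ) (v : M.carrier), F (M.G j v) = W.G j (F v)) ∧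
    (∀ v : M.carrier, F (M.C v) = W.C (F v))

/-- `M`, together with the `b`-module map `ι : V → M`, is the induced module
`Ind_ℓ(V) = U(N) ⊗_{U(b)} V / (c - ℓ)`, characterized by its universal property. -/
def IsInduced (ℓ : ℂ) (V : BRep) (M : NSRep) (ι : V.carrier →ₗ[ℂ] M.carrier) : Prop :=
  IsBLinear V M ι ∧ M.HasCentralCharge ℓ ∧
    ∀ W : NSRep, W.HasCentralCharge ℓ →
      ∀ f : V.carrier →ₗ[ℂ] W.carrier, IsBLinear V W f →
        ∃! F : M.carrier →ₗ[ℂ] W.carrier, IsNSHom M W F ∧ F.comp ι = f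

/-!
Number the modes of the Neveu–Schwarz algebra by doubled degree, `E (2m) = L_m` and
`E (2m - 1) = G_{m - 1/2}`, so that parity is the parity of the index and `b` is spanned by the
modes of nonnegative index. The induced module is spanned by the words `E (-n₁) ⋯ E (-nᵣ) v` with
all `nₛ > 0` and `v ∈ V`. Give `E (-n)` the weight `n + 1` and filter by weight: since the super
bracket of `E (-m)` and `E (-n)` has weight one less than their product, the modes of negative index
supercommute up to lower order.

Put `T = 2t`. Simplicity of `V` upgrades the hypothesis on the `L_i` to `E n V = 0` for all `n > T`.
For `k > 0`, the mode `E (T + k)` lowers the filtration by `k + 1` and acts on symbols as a nonzero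
multiple of the super derivation `∂/∂E (-k)` followed by the injective map `E T` on coefficients.
Suppose a submodule `p` meets `V` trivially. By induction on the weight, all derivatives of the
symbol of an element of `p` vanish, so the symbol itself vanishes by Euler's identity
`∑ₖ (k + 1) E (-k) ∂/∂E (-k) = weight`, and `p = 0`. Otherwise `p` contains the simple module `V`
and is everything. Working with formal combinations of words makes the Poincaré–Birkhoff–Witt
theorem unnecessary.

That `V` embeds in the induced module is seen by letting the modes act on the space of formal
words, where the relations hold modulo a stable subspace whose elements have no component on the
empty word.
-/

namespace NeveuSchwarz

section StructureConstants

/-- The sign `(-1)^{ab}` of the super bracket. Throughout, the Neveu–Schwarz algebra is indexed by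
doubled degree: `E (2m)` stands for `L_m` and `E (2m - 1)` for `G_{m - 1/2}`, so that the parity of
an element is the parity of its index. -/
noncomputable def koszulSign (a b : ℤ) : ℂ := if Even a ∨ Even b then 1 else -1

/-- The coefficient of `E (a + b)` in the super bracket of `E a` and `E b`. -/
noncomputable def structConst (a b : ℤ) : ℂ :=
  if Even a then (if Even b then ((a : ℂ) - b) / 2 else (a : ℂ) / 4 - b / 2)
  else (if Even b then (a : ℂ) / 2 - b / 4 else 2)

/-- The central term of the super bracket of `E a` and `E b` when `c` acts as `ℓ`. -/
noncomputable def cocycle (ℓ : ℂ) (a b : ℤ) : ℂ :=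
  if a + b = 0 then
    (if Even a then (((a : ℂ) / 2) ^ 3 - (a : ℂ) / 2) / 12 * ℓ
      else (((a : ℂ) / 2) ^ 2 - 1 / 4) / 3 * ℓ)
  else 0

theorem exists_eq_two_mul_or_eq_two_mul_sub_one (a : ℤ) :
    ∃ m, a = 2 * m ∨ a = 2 * m - 1 :=
  ⟨(a + 1) / 2, by omega⟩

theorem koszulSign_comm (a b : ℤ) : koszulSign a b = koszulSign b a := by
  simp only [koszulSign, or_comm]

theorem koszulSign_of_even_left {a : ℤ} (ha : Even a) (b : ℤ) : koszulSign a b = 1 := by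
  simp [koszulSign, ha]

theorem koszulSign_mul_self (a b : ℤ) : koszulSign a b * koszulSign a b = 1 := by
  unfold koszulSign; split_ifs <;> norm_num

theorem koszulSign_add_left (a b c : ℤ) :
    koszulSign (a + b) c = koszulSign a c * koszulSign b c := by
  unfold koszulSign
  by_cases ha : Even a <;> by_cases hb : Even b <;> by_cases hc : Even c <;>
    simp [ha, hb, hc, Int.even_add]

theorem koszulSign_congr_left {a a' : ℤ} (h : Even (a - a')) (b : ℤ) :
    koszulSign a b = koszulSign a' b := by
  rw [Int.even_sub] at h
  simp only [koszulSign, h]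

theorem koszulSign_add_right (a b c : ℤ) :
    koszulSign a (b + c) = koszulSign a b * koszulSign a c := by
  simp only [koszulSign_comm a, koszulSign_add_left]

theorem structConst_swap (a b : ℤ) :
    structConst b a = -koszulSign a b * structConst a b := by
  unfold structConst koszulSign
  by_cases ha : Even a <;> by_cases hb : Even b <;>
    simp only [ha, hb, if_true, if_false, or_self, or_true, true_or] <;> ring

theorem structConst_ne_zero {a b : ℤ} (h : Even (a - b)) (hab : a ≠ b) : structConst a b ≠ 0 := by
  rw [Int.even_sub] at h
  have hab' : (a : ℂ) - b ≠ 0 := sub_ne_zero.mpr (by exact_mod_cast hab)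
  unfold structConst
  by_cases ha : Even a <;> simp [ha, h.mp, mt h.mpr, hab']

theorem structConst_jacobi (a b c : ℤ) :
    structConst b c * structConst a (b + c) =
      structConst a b * structConst (a + b) c +
        koszulSign a b * structConst a c * structConst b (a + c) := by
  unfold structConst koszulSign
  by_cases ha : Even a <;> by_cases hb : Even b <;> by_cases hc : Even c <;>
    simp [ha, hb, hc, Int.even_add] <;> ring

variable (ℓ : ℂ)

theorem cocycle_of_add_eq_zero {a b : ℤ} (h : a + b = 0) :
    cocycle ℓ a b =
      if Even a then (((a : ℂ) / 2) ^ 3 - (a : ℂ) / 2) / 12 * ℓ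
      else (((a : ℂ) / 2) ^ 2 - 1 / 4) / 3 * ℓ :=
  if_pos h

theorem cocycle_of_add_ne_zero {a b : ℤ} (h : a + b ≠ 0) : cocycle ℓ a b = 0 := if_neg h

theorem cocycle_of_nonneg {a b : ℤ} (ha : 0 ≤ a) (hb : 0 ≤ b) : cocycle ℓ a b = 0 := by
  by_cases h : a + b = 0
  · obtain rfl : a = 0 := by omega
    simp [cocycle]
  · exact cocycle_of_add_ne_zero ℓ h

theorem cocycle_smul_mem {M : Type*} [AddCommGroup M] [Module ℂ M] {N : Submodule ℂ M} {a b : ℤ}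
    {x : M} (h : a + b = 0 → x ∈ N) : cocycle ℓ a b • x ∈ N := by
  by_cases hab : a + b = 0
  · exact N.smul_mem _ (h hab)
  · rw [cocycle_of_add_ne_zero ℓ hab, zero_smul]
    exact N.zero_mem

theorem cocycle_swap (a b : ℤ) : cocycle ℓ b a = -koszulSign a b * cocycle ℓ a b := by
  by_cases h : a + b = 0
  · rw [cocycle_of_add_eq_zero ℓ h, cocycle_of_add_eq_zero ℓ (by omega : b + a = 0)]
    obtain rfl : b = -a := by omega
    unfold koszulSign
    by_cases ha : Even a <;> simp only [ha, even_neg, if_true, if_false, or_self] <;>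
      push_cast <;> ring
  · rw [cocycle_of_add_ne_zero ℓ h, cocycle_of_add_ne_zero ℓ (by omega), mul_zero]

theorem cocycle_mul_koszulSign (a b c : ℤ) :
    cocycle ℓ a b * (koszulSign c a * koszulSign c b) = cocycle ℓ a b := by
  by_cases h : a + b = 0
  · rw [← koszulSign_add_right, h, koszulSign_comm, koszulSign_of_even_left Even.zero, mul_one]
  · rw [cocycle_of_add_ne_zero ℓ h, zero_mul]

theorem cocycle_jacobi (a b c : ℤ) :
    structConst b c * cocycle ℓ a (b + c) =
      structConst a b * cocycle ℓ (a + b) c +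
        koszulSign a b * structConst a c * cocycle ℓ b (a + c) := by
  by_cases h : a + b + c = 0
  · rw [cocycle_of_add_eq_zero ℓ (by omega), cocycle_of_add_eq_zero ℓ h,
      cocycle_of_add_eq_zero ℓ (by omega)]
    obtain rfl : a = -b - c := by omega
    unfold structConst koszulSign
    by_cases hb : Even b <;> by_cases hc : Even c <;>
      simp [hb, hc, Int.even_add, Int.even_sub] <;> ring
  · rw [cocycle_of_add_ne_zero ℓ (by omega), cocycle_of_add_ne_zero ℓ h,
      cocycle_of_add_ne_zero ℓ (by omega)]
    ring

end StructureConstants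

section Relators

variable {A : Type*} [Ring A] [Algebra ℂ A] (ℓ : ℂ) (E : ℤ → A)

/-- The difference of the two sides of the defining relation of the Neveu–Schwarz algebra for the
super bracket of `E a` and `E b`, at central charge `ℓ`. -/
noncomputable def relator (a b : ℤ) : A :=
  E a * E b - koszulSign a b • (E b * E a) - structConst a b • E (a + b) - cocycle ℓ a b • 1

/-- The family `E` satisfies the relations of the Neveu–Schwarz algebra at central charge `ℓ`. -/
def SatisfiesRelations : Prop := ∀ a b, relator ℓ E a b = 0

theorem relator_swap (a b : ℤ) : relator ℓ E b a = -koszulSign a b • relator ℓ E a b := by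
  simp only [relator, structConst_swap a b, cocycle_swap ℓ a b, koszulSign_comm b a, add_comm b a]
  linear_combination (norm := module) (-koszulSign_mul_self a b) • (E b * E a)

theorem relator_jacobi (n a b : ℤ) :
    E n * relator ℓ E a b =
      (koszulSign n a * koszulSign n b) • (relator ℓ E a b * E n) +
      structConst n a • relator ℓ E (n + a) b +
      (koszulSign n a * structConst n b) • relator ℓ E a (n + b) +
      relator ℓ E n a * E b + koszulSign n a • (E a * relator ℓ E n b) -
      koszulSign a b • (relator ℓ E n b * E a + koszulSign n b • (E b * relator ℓ E n a)) -
      structConst a b • relator ℓ E n (a + b) := by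
  have hA := structConst_jacobi n a b
  have hB := cocycle_jacobi ℓ n a b
  have hsq := koszulSign_mul_self n a
  have hab := cocycle_mul_koszulSign ℓ a b n
  have hna := cocycle_mul_koszulSign ℓ n a b
  have hnb := cocycle_mul_koszulSign ℓ n b a
  rw [koszulSign_comm b n, koszulSign_comm b a] at hna
  rw [koszulSign_comm a n] at hnb
  simp only [relator, mul_sub, sub_mul, mul_smul_comm, smul_mul_assoc, mul_assoc, mul_one, one_mul,
    show n + a + b = n + (a + b) by ring, show a + (n + b) = n + (a + b) by ring,
    koszulSign_add_left, koszulSign_add_right, koszulSign_comm a n]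
  linear_combination (norm := module) -hA • E (n + (a + b)) - hB • (1 : A) +
    (structConst n b * koszulSign a b * hsq) • (E (n + b) * E a) +
    hab • E n - hna • E b + (koszulSign a b * cocycle ℓ n b * hsq - koszulSign n a * hnb) • E a

section Module

variable {M : Type*} [AddCommGroup M] [Module ℂ M] (E : ℤ → Module.End ℂ M)

theorem relator_apply (a b : ℤ) (x : M) :
    relator ℓ E a b x =
      E a (E b x) - koszulSign a b • E b (E a x) - structConst a b • E (a + b) x -
        cocycle ℓ a b • x :=
  rfl

theorem relator_apply_even_even (m n : ℤ) (x : M) :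
    relator ℓ E (2 * m) (2 * n) x =
      E (2 * m) (E (2 * n) x) - E (2 * n) (E (2 * m) x) -
        (((m : ℂ) - n) • E (2 * (m + n)) x +
          (if m + n = 0 then ((m : ℂ) ^ 3 - m) / 12 else 0) • ℓ • x) := by
  have h : 2 * m + 2 * n = 0 ↔ m + n = 0 := by omega
  simp only [relator_apply, koszulSign, structConst, cocycle, even_two_mul, true_or, if_true, h]
  rw [mul_add]
  push_cast
  split_ifs <;> module

theorem relator_apply_even_odd (m j : ℤ) (x : M) :
    relator ℓ E (2 * m) (2 * j - 1) x =
      E (2 * m) (E (2 * j - 1) x) - E (2 * j - 1) (E (2 * m) x) -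
        (((m : ℂ) - 2 * j + 1) / 2) • E (2 * (m + j) - 1) x := by
  have hj : ¬Even (2 * j - 1) := Int.not_even_iff_odd.mpr (by use j - 1; ring)
  rw [relator_apply, cocycle_of_add_ne_zero ℓ (by omega),
    show 2 * m + (2 * j - 1) = 2 * (m + j) - 1 by ring]
  simp only [koszulSign, structConst, even_two_mul, true_or, if_true, hj, if_false]
  push_cast
  module

theorem relator_apply_odd_odd (j k : ℤ) (x : M) :
    relator ℓ E (2 * j - 1) (2 * k - 1) x =
      E (2 * j - 1) (E (2 * k - 1) x) + E (2 * k - 1) (E (2 * j - 1) x) -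
        ((2 : ℂ) • E (2 * (j + k - 1)) x +
          (if j + k = 1 then ((j : ℂ) ^ 2 - j) / 3 else 0) • ℓ • x) := by
  have hj : ¬Even (2 * j - 1) := Int.not_even_iff_odd.mpr (by use j - 1; ring)
  have hk : ¬Even (2 * k - 1) := Int.not_even_iff_odd.mpr (by use k - 1; ring)
  have h : 2 * j - 1 + (2 * k - 1) = 0 ↔ j + k = 1 := by omega
  simp only [relator_apply, koszulSign, structConst, cocycle, hj, hk, or_false, if_false, h]
  rw [show 2 * j - 1 + (2 * k - 1) = 2 * (j + k - 1) by ring]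
  push_cast
  split_ifs <;> module

variable {ℓ E}

theorem apply_apply_of_relator_eq_zero {a b : ℤ} (h : relator ℓ E a b = 0) (x : M) :
    E a (E b x) =
      koszulSign a b • E b (E a x) + structConst a b • E (a + b) x + cocycle ℓ a b • x := by
  have hx := relator_apply ℓ E a b x
  rw [h, LinearMap.zero_apply] at hx
  linear_combination (norm := module) -hx

end Module

end Relators

section FreeModule

variable {V : Type*} [AddCommGroup V] [Module ℂ V]

/-- Prepending the letter `j`. A word `[j₁, j₂, …]` with coefficient `v` stands for the formal
expression `E (-(j₁ + 1)) E (-(j₂ + 1)) ⋯ v`, so `List ℕ →₀ V` is the free module generated by `V`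
under the operators of negative degree. -/
noncomputable def prepend (j : ℕ) : Module.End ℂ (List ℕ →₀ V) :=
  Finsupp.lmapDomain V ℂ (List.cons j)

@[simp]
theorem prepend_single (j : ℕ) (w : List ℕ) (v : V) :
    prepend j (Finsupp.single w v) = Finsupp.single (j :: w) v :=
  Finsupp.mapDomain_single

theorem prepend_apply_nil (j : ℕ) (P : List ℕ →₀ V) : prepend j P [] = 0 :=
  Finsupp.mapDomain_of_notMem_range P [] (by simp)

theorem words_induction {motive : (List ℕ →₀ V) → Prop} (P : List ℕ →₀ V)
    (add : ∀ P Q, motive P → motive Q → motive (P + Q))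
    (nil : ∀ v, motive (Finsupp.single [] v))
    (prepend : ∀ j P, motive P → motive (prepend j P)) : motive P := by
  induction P using Finsupp.induction_linear with
  | zero => simpa using nil 0
  | add P Q hP hQ => exact add P Q hP hQ
  | single w v =>
    induction w with
    | nil => exact nil v
    | cons j w ih => simpa using prepend j _ ih

/-- The family `e` satisfies the relations of the subalgebra `b` of non-negative degrees. -/
def SatisfiesNonnegRelations (e : ℕ → Module.End ℂ V) : Prop :=
  ∀ a b : ℕ, e a * e b = koszulSign a b • (e b * e a) + structConst a b • e (a + b)

variable (ℓ : ℂ) (e : ℕ → Module.End ℂ V)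

/-- The value of `freeMode` on a single word: an operator of non-negative degree is moved to the
right through the word by the super bracket until it acts on the coefficient. -/
noncomputable def freeModeWord : List ℕ → ℤ → V →ₗ[ℂ] (List ℕ →₀ V)
  | w, .negSucc j => Finsupp.lsingle (j :: w)
  | [], .ofNat n => Finsupp.lsingle [] ∘ₗ e n
  | j :: w, .ofNat n =>
      koszulSign n (.negSucc j) • prepend j ∘ₗ freeModeWord w n +
        structConst n (.negSucc j) • freeModeWord w (n + .negSucc j) +
        cocycle ℓ n (.negSucc j) • Finsupp.lsingle w

/-- The operator `E n` on the module induced from `b` to the algebra in which the negative part of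
the Neveu–Schwarz algebra is replaced by a free one. -/
noncomputable def freeMode (n : ℤ) : Module.End ℂ (List ℕ →₀ V) :=
  Finsupp.lsum ℂ fun w => freeModeWord ℓ e w n

theorem freeMode_single (n : ℤ) (w : List ℕ) (v : V) :
    freeMode ℓ e n (Finsupp.single w v) = freeModeWord ℓ e w n v := by
  simp [freeMode]

theorem freeMode_negSucc (j : ℕ) : freeMode ℓ e (.negSucc j) = prepend j := by
  ext w v : 2
  simp [freeMode_single, freeModeWord]

theorem freeMode_natCast_single_nil (n : ℕ) (v : V) :
    freeMode ℓ e n (Finsupp.single [] v) = Finsupp.single [] (e n v) := by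
  change freeMode ℓ e (.ofNat n) _ = _
  simp [freeMode_single, freeModeWord]

theorem relator_freeMode_natCast_negSucc (n j : ℕ) :
    relator ℓ (freeMode ℓ e) n (.negSucc j) = 0 := by
  rw [relator, freeMode_negSucc]
  ext w v : 2
  change _ = (0 : List ℕ →₀ V)
  have h : freeMode ℓ e n (Finsupp.single (j :: w) v) = freeModeWord ℓ e (j :: w) (.ofNat n) v :=
    freeMode_single ℓ e _ _ _
  simp only [LinearMap.comp_apply, LinearMap.sub_apply, LinearMap.smul_apply, Module.End.mul_apply,
    Module.End.one_apply, Finsupp.lsingle_apply, prepend_single, h]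
  simp only [freeModeWord, freeMode_single, LinearMap.add_apply, LinearMap.smul_apply,
    LinearMap.comp_apply, Finsupp.lsingle_apply]
  module

theorem relator_freeMode_negSucc_natCast (j n : ℕ) :
    relator ℓ (freeMode ℓ e) (.negSucc j) n = 0 := by
  rw [relator_swap, relator_freeMode_natCast_negSucc, smul_zero]

variable {e}

theorem relator_freeMode_natCast_natCast (he : SatisfiesNonnegRelations e) (a b : ℕ) :
    relator ℓ (freeMode ℓ e) a b = 0 := by
  refine LinearMap.ext fun P => ?_
  change _ = 0
  induction P using words_induction generalizing a b with
  | add P Q hP hQ => rw [map_add, hP, hQ, add_zero]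
  | nil v =>
    have hv := congr($(he a b) v)
    simp only [Module.End.mul_apply, LinearMap.add_apply, LinearMap.smul_apply] at hv
    simp only [relator_apply, ← Nat.cast_add, freeMode_natCast_single_nil, hv,
      cocycle_of_nonneg ℓ a.cast_nonneg b.cast_nonneg, Finsupp.single_add, ← Finsupp.smul_single]
    module
  | prepend j P ih =>
    have hP : ∀ (x : ℤ) (n : ℕ), relator ℓ (freeMode ℓ e) x n P = 0
      | .ofNat m, n => ih m n
      | .negSucc k, n => by rw [relator_freeMode_negSucc_natCast, LinearMap.zero_apply]
    have hP' : ∀ (n : ℕ) (x : ℤ), relator ℓ (freeMode ℓ e) n x P = 0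
      | n, .ofNat m => ih n m
      | n, .negSucc k => by rw [relator_freeMode_natCast_negSucc, LinearMap.zero_apply]
    have hjac := congr($(relator_jacobi ℓ (freeMode ℓ e) (.negSucc j) a b) P)
    simp only [relator_freeMode_negSucc_natCast, ← Nat.cast_add, ih, hP, hP', LinearMap.add_apply,
      LinearMap.sub_apply, LinearMap.smul_apply, Module.End.mul_apply, LinearMap.zero_apply,
      map_zero, smul_zero, add_zero, sub_zero, freeMode_negSucc] at hjac
    refine (smul_eq_zero.mp hjac.symm).resolve_left ?_
    exact mul_ne_zero (left_ne_zero_of_mul_eq_one (koszulSign_mul_self _ _))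
      (left_ne_zero_of_mul_eq_one (koszulSign_mul_self _ _))

theorem relator_freeMode_eq_zero (he : SatisfiesNonnegRelations e) :
    ∀ {a b : ℤ}, 0 ≤ a ∨ 0 ≤ b → relator ℓ (freeMode ℓ e) a b = 0
  | .ofNat m, .ofNat n, _ => relator_freeMode_natCast_natCast ℓ he m n
  | .ofNat m, .negSucc k, _ => relator_freeMode_natCast_negSucc ℓ e m k
  | .negSucc j, .ofNat n, _ => relator_freeMode_negSucc_natCast ℓ e j n
  | .negSucc _, .negSucc _, h => by simp [Int.negSucc_not_nonneg] at h

variable (e)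

/-- The formal expressions obtained by multiplying a value of a relator by operators of negative
degree; they have to vanish in the module induced from `b`. -/
inductive IsConsequence : (List ℕ →₀ V) → Prop
  | relator (a b : ℤ) (P : List ℕ →₀ V) : IsConsequence (relator ℓ (freeMode ℓ e) a b P)
  | prepend (j : ℕ) {P : List ℕ →₀ V} : IsConsequence P → IsConsequence (prepend j P)

/-- The span of the consequences of the relations; the quotient of `List ℕ →₀ V` by it is the
module induced from `b` at central charge `ℓ`. -/
noncomputable def relationSubmodule : Submodule ℂ (List ℕ →₀ V) :=
  Submodule.span ℂ {P | IsConsequence ℓ e P}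

theorem relator_freeMode_mem_relationSubmodule (a b : ℤ) (P : List ℕ →₀ V) :
    relator ℓ (freeMode ℓ e) a b P ∈ relationSubmodule ℓ e :=
  Submodule.subset_span (.relator a b P)

theorem prepend_mem_relationSubmodule (j : ℕ) {P : List ℕ →₀ V} (hP : P ∈ relationSubmodule ℓ e) :
    prepend j P ∈ relationSubmodule ℓ e := by
  have h : relationSubmodule ℓ e ≤ (relationSubmodule ℓ e).comap (prepend j) :=
    Submodule.span_le.mpr fun P hP => Submodule.subset_span (IsConsequence.prepend j hP)
  exact h hP

variable {e}

theorem IsConsequence.freeMode_natCast_mem (he : SatisfiesNonnegRelations e) {P : List ℕ →₀ V}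
    (hP : IsConsequence ℓ e P) (n : ℕ) : freeMode ℓ e n P ∈ relationSubmodule ℓ e := by
  have hn (x : ℤ) : NeveuSchwarz.relator ℓ (freeMode ℓ e) n x = 0 :=
    relator_freeMode_eq_zero ℓ he (.inl n.cast_nonneg)
  induction hP generalizing n with
  | relator a b Q =>
    have hjac := congr($(relator_jacobi ℓ (freeMode ℓ e) n a b) Q)
    simp only [hn, zero_mul, mul_zero, smul_zero, add_zero, sub_zero, LinearMap.add_apply,
      LinearMap.smul_apply, Module.End.mul_apply] at hjac
    rw [hjac]
    exact add_mem (add_mem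
      (Submodule.smul_mem _ _ (relator_freeMode_mem_relationSubmodule ℓ e a b _))
      (Submodule.smul_mem _ _ (relator_freeMode_mem_relationSubmodule ℓ e _ b Q)))
      (Submodule.smul_mem _ _ (relator_freeMode_mem_relationSubmodule ℓ e a _ Q))
  | @prepend j Q hQ ih =>
    have hmem : ∀ x : ℤ, freeMode ℓ e x Q ∈ relationSubmodule ℓ e
      | .ofNat m => ih m fun x => relator_freeMode_eq_zero ℓ he (.inl m.cast_nonneg)
      | .negSucc k => by
        simpa only [freeMode_negSucc] using
          prepend_mem_relationSubmodule ℓ e k (Submodule.subset_span hQ)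
    have hcomm := apply_apply_of_relator_eq_zero (hn (.negSucc j)) Q
    rw [freeMode_negSucc] at hcomm
    rw [hcomm]
    exact add_mem (add_mem
      (Submodule.smul_mem _ _ (prepend_mem_relationSubmodule ℓ e j (ih n hn)))
      (Submodule.smul_mem _ _ (hmem _)))
      (Submodule.smul_mem _ _ (Submodule.subset_span hQ))

theorem freeMode_mem_relationSubmodule (he : SatisfiesNonnegRelations e) (n : ℤ)
    {P : List ℕ →₀ V} (hP : P ∈ relationSubmodule ℓ e) :
    freeMode ℓ e n P ∈ relationSubmodule ℓ e := by
  cases n with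
  | ofNat n =>
    have h : relationSubmodule ℓ e ≤ (relationSubmodule ℓ e).comap (freeMode ℓ e n) :=
      Submodule.span_le.mpr fun P hP => hP.freeMode_natCast_mem ℓ he n
    exact h hP
  | negSucc j => simpa only [freeMode_negSucc] using prepend_mem_relationSubmodule ℓ e j hP

theorem relator_freeMode_apply_nil (he : SatisfiesNonnegRelations e) (a b : ℤ)
    (P : List ℕ →₀ V) : relator ℓ (freeMode ℓ e) a b P [] = 0 := by
  by_cases h : 0 ≤ a ∨ 0 ≤ b
  · rw [relator_freeMode_eq_zero ℓ he h, LinearMap.zero_apply, Finsupp.zero_apply]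
  · obtain ⟨j, rfl⟩ := Int.eq_negSucc_of_lt_zero (by omega : a < 0)
    obtain ⟨k, rfl⟩ := Int.eq_negSucc_of_lt_zero (by omega : b < 0)
    rw [relator_apply, cocycle_of_add_ne_zero ℓ (by omega), Int.negSucc_add_negSucc]
    simp only [freeMode_negSucc, Finsupp.sub_apply, Finsupp.smul_apply, prepend_apply_nil,
      smul_zero, zero_smul, sub_zero]

theorem apply_nil_eq_zero_of_mem_relationSubmodule (he : SatisfiesNonnegRelations e)
    {P : List ℕ →₀ V} (hP : P ∈ relationSubmodule ℓ e) : P [] = 0 := by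
  have h : relationSubmodule ℓ e ≤ LinearMap.ker (Finsupp.lapply []) :=
    Submodule.span_le.mpr fun P hP => by
      cases hP with
      | relator a b P => exact relator_freeMode_apply_nil ℓ he a b P
      | prepend j h => exact prepend_apply_nil j _
  exact h hP

/-- The operator `E n` on the module induced from `b`. -/
noncomputable def inducedMode (he : SatisfiesNonnegRelations e) (n : ℤ) :
    Module.End ℂ ((List ℕ →₀ V) ⧸ relationSubmodule ℓ e) :=
  (relationSubmodule ℓ e).mapQ _ (freeMode ℓ e n)
    fun _ hP => freeMode_mem_relationSubmodule ℓ he n hP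

theorem satisfiesRelations_inducedMode (he : SatisfiesNonnegRelations e) :
    SatisfiesRelations ℓ (inducedMode ℓ he) := fun a b => by
  refine LinearMap.ext fun x => Submodule.Quotient.induction_on _ x fun P => ?_
  exact (Submodule.Quotient.mk_eq_zero _).mpr (relator_freeMode_mem_relationSubmodule ℓ e a b P)

variable (e)

/-- The canonical map from `V` to the module induced from `b`. -/
noncomputable def inducedMap : V →ₗ[ℂ] (List ℕ →₀ V) ⧸ relationSubmodule ℓ e :=
  (relationSubmodule ℓ e).mkQ ∘ₗ Finsupp.lsingle []

variable {e}

theorem inducedMode_natCast_inducedMap (he : SatisfiesNonnegRelations e) (n : ℕ) (v : V) :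
    inducedMode ℓ he n (inducedMap ℓ e v) = inducedMap ℓ e (e n v) :=
  congr(Submodule.Quotient.mk $(freeMode_natCast_single_nil ℓ e n v))

theorem inducedMap_injective (he : SatisfiesNonnegRelations e) :
    Function.Injective (inducedMap ℓ e) := by
  refine (injective_iff_map_eq_zero _).mpr fun v hv => ?_
  have hmem : Finsupp.single [] v ∈ relationSubmodule ℓ e :=
    (Submodule.Quotient.mk_eq_zero _).mp hv
  simpa using apply_nil_eq_zero_of_mem_relationSubmodule ℓ he hmem

end FreeModule

section Supported

variable {R α V M : Type*} [CommRing R] [AddCommGroup V] [Module R V] [AddCommGroup M] [Module R M]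
  {S : Set α} {N : Submodule R M} {f g : (α →₀ V) →ₗ[R] M} {P : α →₀ V}

theorem apply_mem_of_mem_supported (hf : ∀ w ∈ S, ∀ v, f (Finsupp.single w v) ∈ N)
    (hP : P ∈ Finsupp.supported V R S) : f P ∈ N := by
  rw [← P.sum_single, Finsupp.sum, map_sum]
  exact N.sum_mem fun w hw => hf w (hP hw) _

theorem apply_smodEq_of_mem_supported
    (h : ∀ w ∈ S, ∀ v, f (Finsupp.single w v) ≡ g (Finsupp.single w v) [SMOD N])
    (hP : P ∈ Finsupp.supported V R S) : f P ≡ g P [SMOD N] :=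
  SModEq.sub_mem.mpr <|
    apply_mem_of_mem_supported (f := f - g) (fun w hw v => SModEq.sub_mem.mp (h w hw v)) hP

end Supported

section Filtration

variable {V M : Type*} [AddCommGroup V] [Module ℂ V] [AddCommGroup M] [Module ℂ M]

/-- The weight of a word: `E (-n)` with `n > 0` has weight `n + 1`. -/
def weight : List ℕ → ℕ
  | [] => 0
  | j :: w => weight w + j + 2

/-- The span of the words of weight less than `d`. -/
def wordsBelow (V : Type*) [AddCommGroup V] [Module ℂ V] (d : ℤ) : Submodule ℂ (List ℕ →₀ V) :=
  Finsupp.supported V ℂ {w | (weight w : ℤ) < d}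

theorem wordsBelow_mono {d d' : ℤ} (h : d ≤ d') : wordsBelow V d ≤ wordsBelow V d' :=
  Finsupp.supported_mono fun _ hw => lt_of_lt_of_le hw h

theorem single_mem_wordsBelow {w : List ℕ} {d : ℤ} (h : weight w < d) (v : V) :
    Finsupp.single w v ∈ wordsBelow V d :=
  Finsupp.single_mem_supported ℂ v h

theorem wordsBelow_eq_bot {d : ℤ} (hd : d ≤ 0) : wordsBelow V d = ⊥ := by
  have h : {w | (weight w : ℤ) < d} = ∅ := by
    ext w
    simp only [Set.mem_ofPred_eq, Set.mem_empty_iff_false, iff_false]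
    omega
  rw [wordsBelow, h, Finsupp.supported_empty]

theorem eq_single_nil_of_mem_wordsBelow {d : ℤ} (hd : d ≤ 2) {P : List ℕ →₀ V}
    (hP : P ∈ wordsBelow V d) : P = Finsupp.single [] (P []) := by
  refine Finsupp.eq_single_iff.mpr ⟨fun w hw => ?_, rfl⟩
  have h : (weight w : ℤ) < d := hP hw
  cases w with
  | nil => simp
  | cons j w =>
    simp only [weight] at h
    omega

theorem exists_mem_wordsBelow (P : List ℕ →₀ V) : ∃ d : ℕ, P ∈ wordsBelow V d := by
  refine ⟨P.support.sup weight + 1, fun w hw => ?_⟩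
  exact_mod_cast Nat.lt_succ_of_le (Finset.le_sup (f := weight) hw)

theorem prepend_mem_wordsBelow (j : ℕ) {d : ℤ} {P : List ℕ →₀ V} (hP : P ∈ wordsBelow V d) :
    prepend j P ∈ wordsBelow V (d + j + 2) := by
  refine apply_mem_of_mem_supported (fun w hw v => ?_) hP
  rw [prepend_single]
  refine single_mem_wordsBelow ?_ v
  have hw : (weight w : ℤ) < d := hw
  simp only [weight]
  omega

/-- The endomorphism of `List ℕ →₀ V` applying `A` to all coefficients. -/
noncomputable def coeffMap (A : Module.End ℂ V) : Module.End ℂ (List ℕ →₀ V) :=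
  Finsupp.mapRange.linearMap A

@[simp]
theorem coeffMap_single (A : Module.End ℂ V) (w : List ℕ) (v : V) :
    coeffMap A (Finsupp.single w v) = Finsupp.single w (A v) := by
  simp [coeffMap]

theorem coeffMap_mul (A B : Module.End ℂ V) : coeffMap (A * B) = coeffMap A * coeffMap B :=
  Finsupp.mapRange.linearMap_comp A B

theorem coeffMap_one : coeffMap (1 : Module.End ℂ V) = 1 := Finsupp.mapRange.linearMap_id

theorem coeffMap_mem_wordsBelow (A : Module.End ℂ V) {d : ℤ} {P : List ℕ →₀ V}
    (hP : P ∈ wordsBelow V d) : coeffMap A P ∈ wordsBelow V d := by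
  refine apply_mem_of_mem_supported (fun w hw v => ?_) hP
  rw [coeffMap_single]
  exact single_mem_wordsBelow hw _

theorem coeffMap_prepend (A : Module.End ℂ V) (j : ℕ) (P : List ℕ →₀ V) :
    coeffMap A (prepend j P) = prepend j (coeffMap A P) := by
  have h : coeffMap A ∘ₗ prepend j = prepend j ∘ₗ coeffMap A := by
    ext w v : 2
    simp
  exact congr($h P)

/-- The value of `deriv` on a single word. -/
noncomputable def derivWord (k : ℕ) : List ℕ → V →ₗ[ℂ] (List ℕ →₀ V)
  | [] => 0
  | j :: w =>
      koszulSign (.negSucc k) (.negSucc j) • prepend j ∘ₗ derivWord k w +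
        if k = j then Finsupp.lsingle w else 0

/-- The super derivation `∂/∂E (-(k + 1))` of words. -/
noncomputable def deriv (k : ℕ) : Module.End ℂ (List ℕ →₀ V) :=
  Finsupp.lsum ℂ (derivWord k)

theorem deriv_single_nil (k : ℕ) (v : V) : deriv k (Finsupp.single [] v) = 0 := by
  rw [deriv, Finsupp.lsum_single]
  rfl

theorem deriv_prepend (k j : ℕ) (P : List ℕ →₀ V) :
    deriv k (prepend j P) =
      koszulSign (.negSucc k) (.negSucc j) • prepend j (deriv k P) + if k = j then P else 0 := by
  have h : deriv k ∘ₗ prepend j =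
      koszulSign (.negSucc k) (.negSucc j) • prepend j ∘ₗ deriv (V := V) k +
        if k = j then LinearMap.id else 0 := by
    ext w v : 2
    by_cases hkj : k = j <;> simp [hkj, deriv, derivWord]
  have hP := congr($h P)
  split_ifs at hP ⊢ <;> simpa using hP

theorem deriv_coeffMap (k : ℕ) (A : Module.End ℂ V) (P : List ℕ →₀ V) :
    deriv k (coeffMap A P) = coeffMap A (deriv k P) := by
  induction P using words_induction with
  | add P Q hP hQ => simp only [map_add, hP, hQ]
  | nil v => simp only [coeffMap_single, deriv_single_nil, map_zero]
  | prepend j P ih =>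
    rw [coeffMap_prepend, deriv_prepend, deriv_prepend, ih, map_add, map_smul, coeffMap_prepend]
    split_ifs
    exacts [rfl, by rw [map_zero]]

theorem deriv_single_mem_wordsBelow (k : ℕ) (w : List ℕ) (v : V) :
    deriv k (Finsupp.single w v) ∈ wordsBelow V (weight w - k - 1) := by
  induction w with
  | nil => simp only [deriv_single_nil, zero_mem]
  | cons j w ih =>
    rw [← prepend_single, deriv_prepend]
    refine add_mem (Submodule.smul_mem _ _ (wordsBelow_mono ?_ (prepend_mem_wordsBelow j ih))) ?_
    · simp only [weight]
      omega
    · split_ifs with h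
      · subst h
        refine single_mem_wordsBelow ?_ v
        simp only [weight]
        omega
      · exact zero_mem _

theorem deriv_mem_wordsBelow (k : ℕ) {d : ℤ} {P : List ℕ →₀ V} (hP : P ∈ wordsBelow V d) :
    deriv k P ∈ wordsBelow V (d - (k + 2)) := by
  refine apply_mem_of_mem_supported (fun w hw v => ?_) hP
  have hw : (weight w : ℤ) < d := hw
  exact wordsBelow_mono (by omega) (deriv_single_mem_wordsBelow k w v)

variable (E : ℤ → Module.End ℂ M) (i : V →ₗ[ℂ] M)

/-- The value of `eval` on a single word. -/
noncomputable def evalWord : List ℕ → V →ₗ[ℂ] M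
  | [] => i
  | j :: w => E (.negSucc j) ∘ₗ evalWord w

/-- The element of `M` denoted by a formal combination of words. -/
noncomputable def eval : (List ℕ →₀ V) →ₗ[ℂ] M :=
  Finsupp.lsum ℂ (evalWord E i)

theorem eval_single_nil (v : V) : eval E i (Finsupp.single [] v) = i v := by
  simp [eval, evalWord]

theorem eval_prepend (j : ℕ) (P : List ℕ →₀ V) :
    eval E i (prepend j P) = E (.negSucc j) (eval E i P) := by
  have h : eval E i ∘ₗ prepend j = E (.negSucc j) ∘ₗ eval E i := by
    ext w v : 2
    simp [eval, evalWord]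
  exact congr($h P)

/-- The subspace of `M` spanned by the values of the words of weight less than `d`. -/
noncomputable def filtration (d : ℤ) : Submodule ℂ M := (wordsBelow V d).map (eval E i)

theorem filtration_mono {d d' : ℤ} (h : d ≤ d') : filtration E i d ≤ filtration E i d' :=
  Submodule.map_mono (wordsBelow_mono h)

theorem filtration_eq_bot {d : ℤ} (hd : d ≤ 0) : filtration E i d = ⊥ := by
  rw [filtration, wordsBelow_eq_bot hd, Submodule.map_bot]

variable {E i}

theorem eval_mem_filtration {d : ℤ} {P : List ℕ →₀ V} (hP : P ∈ wordsBelow V d) :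
    eval E i P ∈ filtration E i d :=
  Submodule.mem_map_of_mem hP

theorem mode_negSucc_mem_filtration (j : ℕ) {d d' : ℤ} (h : d + j + 2 ≤ d') {x : M}
    (hx : x ∈ filtration E i d) : E (.negSucc j) x ∈ filtration E i d' := by
  obtain ⟨P, hP, rfl⟩ := hx
  rw [← eval_prepend]
  exact filtration_mono E i h (eval_mem_filtration (prepend_mem_wordsBelow j hP))

theorem mode_negSucc_smodEq (j : ℕ) {d d' : ℤ} (h : d + j + 2 ≤ d') {x y : M}
    (hxy : x ≡ y [SMOD filtration E i d]) :
    E (.negSucc j) x ≡ E (.negSucc j) y [SMOD filtration E i d'] := by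
  rw [SModEq.sub_mem, ← map_sub]
  exact mode_negSucc_mem_filtration j h (SModEq.sub_mem.mp hxy)

/-- The amount by which `E n` raises the filtration when `e n = 0` for all `n > T`. -/
def degreeShift (T : ℕ) (n : ℤ) : ℤ :=
  if n < 0 then 1 - n else if n ≤ T then 0 else T - n - 1

theorem degreeShift_of_lt {T : ℕ} {n : ℤ} (h : T < n) : degreeShift T n = T - n - 1 := by
  rw [degreeShift, if_neg (by omega), if_neg (by omega)]

/-- The modes `E` of a Neveu–Schwarz module `M` extend along `i : V → M` nonnegative modes `e` on
`V` which vanish above the even index `T ≥ 2`. -/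
structure IsTruncatedExtension (ℓ : ℂ) (T : ℕ) (E : ℤ → Module.End ℂ M) (i : V →ₗ[ℂ] M)
    (e : ℕ → Module.End ℂ V) : Prop where
  relations : SatisfiesRelations ℓ E
  map_mode : ∀ (n : ℕ) (v : V), E n (i v) = i (e n v)
  mode_eq_zero : ∀ n, T < n → e n = 0
  even : Even T
  two_le : 2 ≤ T

namespace IsTruncatedExtension

variable {ℓ : ℂ} {T : ℕ} {e : ℕ → Module.End ℂ V} (H : IsTruncatedExtension ℓ T E i e)

include H

theorem mode_eval_single_mem_filtration (w : List ℕ) (n : ℤ) (v : V) :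
    E n (eval E i (Finsupp.single w v)) ∈ filtration E i (weight w + 1 + degreeShift T n) := by
  have hT := H.two_le
  induction w generalizing n with
  | nil =>
    simp only [eval_single_nil]
    cases n with
    | ofNat n =>
      have hmap := H.map_mode n v
      rw [Int.ofNat_eq_natCast, hmap, ← eval_single_nil E i]
      by_cases hn : T < n
      · simp only [H.mode_eq_zero n hn, LinearMap.zero_apply, Finsupp.single_zero, map_zero,
          zero_mem]
      · refine eval_mem_filtration (single_mem_wordsBelow ?_ _)
        simp only [weight, degreeShift]
        split_ifs <;> omega
    | negSucc j =>
      rw [← eval_single_nil E i, ← eval_prepend, prepend_single]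
      refine eval_mem_filtration (single_mem_wordsBelow ?_ _)
      simp only [weight, degreeShift]
      split_ifs <;> omega
  | cons j w ih =>
    rw [← prepend_single, eval_prepend, apply_apply_of_relator_eq_zero (H.relations n (.negSucc j))]
    have hx : eval E i (Finsupp.single w v) ∈ filtration E i (weight w + 1) :=
      eval_mem_filtration (single_mem_wordsBelow (by omega) v)
    refine add_mem (add_mem (Submodule.smul_mem _ _ (mode_negSucc_mem_filtration j ?_ (ih n)))
      (Submodule.smul_mem _ _ (filtration_mono E i ?_ (ih _))))
      (cocycle_smul_mem ℓ fun hn => filtration_mono E i ?_ hx)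
    all_goals simp only [weight, degreeShift]
    · omega
    all_goals split_ifs <;> omega

theorem mode_mem_filtration (n : ℤ) {d d' : ℤ} (h : d + degreeShift T n ≤ d') {x : M}
    (hx : x ∈ filtration E i d) : E n x ∈ filtration E i d' := by
  obtain ⟨P, hP, rfl⟩ := hx
  refine apply_mem_of_mem_supported (f := E n ∘ₗ eval E i) (fun w hw v => ?_) hP
  have hw : (weight w : ℤ) < d := hw
  exact filtration_mono E i (by omega) (H.mode_eval_single_mem_filtration w n v)

theorem mode_mem_range_eval (n : ℤ) {x : M} (hx : x ∈ LinearMap.range (eval E i)) :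
    E n x ∈ LinearMap.range (eval E i) := by
  obtain ⟨P, rfl⟩ := hx
  obtain ⟨d, hP⟩ := exists_mem_wordsBelow P
  exact LinearMap.map_le_range (H.mode_mem_filtration n le_rfl (eval_mem_filtration hP))

theorem mode_smodEq (n : ℤ) {d d' : ℤ} (h : d + degreeShift T n ≤ d') {x y : M}
    (hxy : x ≡ y [SMOD filtration E i d]) : E n x ≡ E n y [SMOD filtration E i d'] := by
  rw [SModEq.sub_mem, ← map_sub]
  exact H.mode_mem_filtration n h (SModEq.sub_mem.mp hxy)

theorem mode_mode_negSucc_smodEq {n : ℤ} (hn : T ≤ n) {j : ℕ} (hnj : n ≠ T + (j + 1)) {d : ℤ}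
    {x : M} (hx : x ∈ filtration E i d) :
    E n (E (.negSucc j) x) ≡ koszulSign n (.negSucc j) • E (.negSucc j) (E n x)
      [SMOD filtration E i (d + degreeShift T n + (j + 1))] := by
  have hT := H.two_le
  rw [SModEq.sub_mem, apply_apply_of_relator_eq_zero (H.relations n (.negSucc j)),
    add_assoc (_ • _), add_sub_cancel_left]
  refine add_mem (Submodule.smul_mem _ _ (H.mode_mem_filtration _ ?_ hx))
    (cocycle_smul_mem ℓ fun h => filtration_mono E i ?_ hx)
  all_goals
    simp only [degreeShift]
    split_ifs <;> omega

theorem mode_mode_negSucc_self (k : ℕ) (x : M) :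
    E (T + (k + 1)) (E (.negSucc k) x) =
      koszulSign (T + (k + 1)) (.negSucc k) • E (.negSucc k) (E (T + (k + 1)) x) +
        structConst (T + (k + 1)) (.negSucc k) • E T x := by
  have hT := H.two_le
  have hindex : (T + (k + 1) : ℤ) + .negSucc k = T := by omega
  rw [apply_apply_of_relator_eq_zero (H.relations _ _), hindex, cocycle_of_add_ne_zero ℓ (by omega),
    zero_smul, add_zero]

theorem mode_top_eval_single_smodEq (w : List ℕ) (v : V) :
    E T (eval E i (Finsupp.single w v)) ≡ eval E i (Finsupp.single w (e T v))
      [SMOD filtration E i (weight w)] := by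
  induction w with
  | nil => rw [eval_single_nil, eval_single_nil, H.map_mode]
  | cons j w ih =>
    have hx : eval E i (Finsupp.single w v) ∈ filtration E i (weight w + 1) :=
      eval_mem_filtration (single_mem_wordsBelow (by omega) v)
    have hcomm := H.mode_mode_negSucc_smodEq le_rfl (j := j) (by omega) hx
    rw [koszulSign_of_even_left (by exact_mod_cast H.even), one_smul] at hcomm
    simp only [← prepend_single, eval_prepend]
    refine (hcomm.mono (filtration_mono E i ?_)).trans (mode_negSucc_smodEq j ?_ ih)
    · simp only [weight, degreeShift]
      split_ifs <;> omega
    · simp only [weight]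
      omega

theorem mode_eval_single_smodEq (k : ℕ) (w : List ℕ) (v : V) :
    E (T + (k + 1)) (eval E i (Finsupp.single w v)) ≡
      structConst (T + (k + 1)) (.negSucc k) • eval E i (deriv k (Finsupp.single w (e T v)))
      [SMOD filtration E i (weight w - (k + 2))] := by
  induction w with
  | nil =>
    have hmap := H.map_mode (T + (k + 1)) v
    rw [H.mode_eq_zero _ (by omega), LinearMap.zero_apply, map_zero] at hmap
    push_cast at hmap
    rw [deriv_single_nil, eval_single_nil, map_zero, smul_zero, hmap]
  | cons j w ih =>
    have hx : eval E i (Finsupp.single w v) ∈ filtration E i (weight w + 1) :=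
      eval_mem_filtration (single_mem_wordsBelow (by omega) v)
    have hsign : koszulSign (T + (k + 1)) (.negSucc j) = koszulSign (.negSucc k) (.negSucc j) := by
      obtain ⟨m, hm⟩ := H.even
      exact koszulSign_congr_left ⟨m + k + 1, by omega⟩ _
    have hih := (mode_negSucc_smodEq j (d' := weight (j :: w) - (k + 2))
      (by simp only [weight]; omega) ih).smul (koszulSign (.negSucc k) (.negSucc j))
    simp only [← prepend_single, eval_prepend, deriv_prepend, map_add, map_smul, smul_add] at hih ⊢
    by_cases hkj : k = j
    · subst hkj
      have htop := ((H.mode_top_eval_single_smodEq w v).mono (filtration_mono E i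
        (d' := weight (k :: w) - (k + 2)) (by simp only [weight]; omega))).smul
          (structConst (T + (k + 1)) (.negSucc k))
      rw [H.mode_mode_negSucc_self, hsign, if_pos rfl, smul_comm (structConst _ _)]
      exact hih.add htop
    · have hcomm := H.mode_mode_negSucc_smodEq (n := T + (k + 1)) (by omega) (j := j) (by omega) hx
      rw [hsign] at hcomm
      rw [if_neg hkj, map_zero, smul_zero, add_zero, smul_comm (structConst _ _)]
      refine (hcomm.mono (filtration_mono E i ?_)).trans hih
      rw [degreeShift_of_lt (by omega)]
      simp only [weight]
      omega

theorem mode_eval_smodEq (k : ℕ) {d : ℤ} {P : List ℕ →₀ V} (hP : P ∈ wordsBelow V (d + 1)) :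
    E (T + (k + 1)) (eval E i P) ≡
      structConst (T + (k + 1)) (.negSucc k) • eval E i (deriv k (coeffMap (e T) P))
      [SMOD filtration E i (d - (k + 2))] := by
  refine apply_smodEq_of_mem_supported (f := E (T + (k + 1)) ∘ₗ eval E i)
    (g := structConst (T + (k + 1)) (.negSucc k) • eval E i ∘ₗ deriv k ∘ₗ coeffMap (e T))
    (fun w hw v => ?_) hP
  have hw : (weight w : ℤ) < d + 1 := hw
  simp only [LinearMap.smul_apply, LinearMap.comp_apply, coeffMap_single]
  exact (H.mode_eval_single_smodEq k w v).mono (filtration_mono E i (by omega))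

theorem mode_negSucc_comm_smodEq (k j : ℕ) {d : ℤ} {x : M} (hx : x ∈ filtration E i d) :
    E (.negSucc k) (E (.negSucc j) x) ≡
      koszulSign (.negSucc k) (.negSucc j) • E (.negSucc j) (E (.negSucc k) x)
      [SMOD filtration E i (d + k + j + 3)] := by
  have hindex : Int.negSucc k + .negSucc j = .negSucc (k + j + 1) := by omega
  rw [SModEq.sub_mem, apply_apply_of_relator_eq_zero (H.relations _ _), hindex,
    cocycle_of_add_ne_zero ℓ (by omega), zero_smul, add_zero, add_sub_cancel_left]
  exact Submodule.smul_mem _ _ (mode_negSucc_mem_filtration _ (by push_cast; omega) hx)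

theorem euler_single_smodEq {N : ℕ} (w : List ℕ) (hN : weight w ≤ N) (v : V) :
    ∑ k ∈ Finset.range N, (k + 2 : ℂ) • E (.negSucc k) (eval E i (deriv k (Finsupp.single w v))) ≡
      (weight w : ℂ) • eval E i (Finsupp.single w v) [SMOD filtration E i (weight w)] := by
  induction w with
  | nil => simp [deriv_single_nil, weight]
  | cons j w ih =>
    have hj : j < N := by simp only [weight] at hN; omega
    set P := Finsupp.single w v
    have hterm (k : ℕ) :
        (k + 2 : ℂ) • E (.negSucc k) (eval E i (deriv k (prepend j P))) ≡
          E (.negSucc j) ((k + 2 : ℂ) • E (.negSucc k) (eval E i (deriv k P))) +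
            (if k = j then (k + 2 : ℂ) • E (.negSucc j) (eval E i P) else 0)
          [SMOD filtration E i (weight (j :: w))] := by
      have hcomm := ((H.mode_negSucc_comm_smodEq k j (eval_mem_filtration
        (deriv_single_mem_wordsBelow k w v))).smul (koszulSign (.negSucc k) (.negSucc j))).mono
          (filtration_mono E i (d' := weight (j :: w)) (by simp only [weight]; omega))
      rw [smul_smul, koszulSign_mul_self, one_smul] at hcomm
      rw [deriv_prepend, map_add, map_smul, eval_prepend, map_add, map_smul, smul_add, map_smul]
      refine (hcomm.smul _).add ?_
      split_ifs with hkj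
      · rw [hkj]
      · rw [map_zero, map_zero, smul_zero]
    have hsum := mode_negSucc_smodEq (E := E) j (d' := weight (j :: w))
      (by simp only [weight]; omega) (ih (by simp only [weight] at hN; omega))
    rw [← prepend_single, eval_prepend]
    refine (SModEq.sum fun k _ => hterm k).trans ?_
    rw [Finset.sum_add_distrib, ← map_sum, Finset.sum_ite_eq', if_pos (Finset.mem_range.mpr hj)]
    have hweight : (weight (j :: w) : ℂ) = weight w + (j + 2) := by
      simp only [weight]
      push_cast
      ring
    rw [map_smul] at hsum
    rw [hweight, add_smul (weight w : ℂ)]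
    exact hsum.add .rfl

theorem euler_smodEq {d : ℕ} {P : List ℕ →₀ V} (hP : P ∈ wordsBelow V (d + 1)) :
    ∑ k ∈ Finset.range d, (k + 2 : ℂ) • E (.negSucc k) (eval E i (deriv k P)) ≡
      (d : ℂ) • eval E i P [SMOD filtration E i d] := by
  have h := apply_smodEq_of_mem_supported (N := filtration E i d)
    (f := ∑ k ∈ Finset.range d, (k + 2 : ℂ) • E (.negSucc k) ∘ₗ eval E i ∘ₗ deriv k)
    (g := (d : ℂ) • eval E i) (fun w hw v => ?_) hP
  · simpa only [LinearMap.sum_apply, LinearMap.smul_apply, LinearMap.comp_apply] using h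
  simp only [LinearMap.sum_apply, LinearMap.smul_apply, LinearMap.comp_apply]
  have hw : (weight w : ℤ) < d + 1 := hw
  have hEuler := (H.euler_single_smodEq (N := d) w (by omega) v).mono
    (filtration_mono E i (d' := d) (by omega))
  obtain hlt | heq : weight w < d ∨ weight w = d := by omega
  · refine hEuler.trans (SModEq.sub_mem.mpr ?_)
    rw [← sub_smul]
    exact Submodule.smul_mem _ _ (eval_mem_filtration (single_mem_wordsBelow (by omega) v))
  · rwa [heq] at hEuler

end IsTruncatedExtension

variable (E i) in
/-- The terms of weight at least `d` in `P` cancel up to lower order on evaluation, whatever linear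
map is first applied to the coefficients. -/
def SymbolVanishes (d : ℤ) (P : List ℕ →₀ V) : Prop :=
  ∀ A : Module.End ℂ V, eval E i (coeffMap A P) ∈ filtration E i d

theorem SymbolVanishes.of_smul_coeffMap {d : ℤ} {P : List ℕ →₀ V} {B : Module.End ℂ V}
    (hB : Function.Injective B) {c : ℂ} (hc : c ≠ 0)
    (h : SymbolVanishes E i d (c • coeffMap B P)) : SymbolVanishes E i d P := by
  obtain ⟨S, hS⟩ := LinearMap.exists_leftInverse_of_injective B (LinearMap.ker_eq_bot.mpr hB)
  intro A
  have hAS := h (A * S)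
  have hASB : A * S * B = A := by rw [mul_assoc, show S * B = 1 from hS, mul_one]
  rwa [map_smul, map_smul, Submodule.smul_mem_iff _ hc, ← Module.End.mul_apply, ← coeffMap_mul,
    hASB] at hAS

namespace IsTruncatedExtension

variable {ℓ : ℂ} {T : ℕ} {e : ℕ → Module.End ℂ V} (H : IsTruncatedExtension ℓ T E i e)

include H

theorem symbolVanishes_of_deriv {d : ℤ} (hd : 0 < d) {P : List ℕ →₀ V}
    (hP : P ∈ wordsBelow V (d + 1))
    (h : ∀ k : ℕ, SymbolVanishes E i (d - (k + 2)) (deriv k P)) : SymbolVanishes E i d P := by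
  intro A
  lift d to ℕ using hd.le
  have hEuler := H.euler_smodEq (coeffMap_mem_wordsBelow A hP)
  have hsum : ∑ k ∈ Finset.range d,
      (k + 2 : ℂ) • E (.negSucc k) (eval E i (deriv k (coeffMap A P))) ∈ filtration E i d := by
    refine Submodule.sum_mem _ fun k _ => Submodule.smul_mem _ _ ?_
    rw [deriv_coeffMap]
    exact mode_negSucc_mem_filtration k (by omega) (h k A)
  have hd0 : (d : ℂ) ≠ 0 := by exact_mod_cast hd.ne'
  rw [← Submodule.smul_mem_iff _ hd0, ← SModEq.zero]
  exact hEuler.symm.trans (SModEq.zero.mpr hsum)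

variable (hT : Function.Injective (e T)) {p : Submodule ℂ M}
  (hp : ∀ n : ℕ, T < n → ∀ x ∈ p, E n x ∈ p) (hi : ∀ v, i v ∈ p → v = 0)

include hT hp hi

theorem symbolVanishes_of_mem (d : ℤ) {P : List ℕ →₀ V} (hP : P ∈ wordsBelow V (d + 1)) {y : M}
    (hy : y ∈ p) (hyP : y ≡ eval E i P [SMOD filtration E i d]) : SymbolVanishes E i d P := by
  rcases le_or_gt d 0 with hd | hd
  · obtain ⟨v, rfl⟩ : ∃ v, P = Finsupp.single [] v :=
      ⟨_, eq_single_nil_of_mem_wordsBelow (by omega) hP⟩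
    rw [filtration_eq_bot E i hd, SModEq.bot, eval_single_nil] at hyP
    obtain rfl := hi v (hyP ▸ hy)
    intro A
    simp only [Finsupp.single_zero, map_zero, zero_mem]
  refine H.symbolVanishes_of_deriv hd hP fun k => ?_
  have hconst : structConst (T + (k + 1)) (.negSucc k) ≠ 0 := by
    obtain ⟨m, hm⟩ := H.even
    exact structConst_ne_zero ⟨m + k + 1, by omega⟩ (by omega)
  have hmode : E (T + (k + 1)) y ≡ E (T + (k + 1)) (eval E i P)
      [SMOD filtration E i (d - (k + 2))] :=
    H.mode_smodEq _ (by rw [degreeShift_of_lt (by omega)]; omega) hyP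
  have hderiv := hmode.trans (H.mode_eval_smodEq k hP)
  rw [deriv_coeffMap, ← map_smul] at hderiv
  have hmem : structConst (T + (k + 1)) (.negSucc k) • coeffMap (e T) (deriv k P) ∈
      wordsBelow V (d - (k + 2) + 1) :=
    Submodule.smul_mem _ _ (coeffMap_mem_wordsBelow _
      (wordsBelow_mono (by omega) (deriv_mem_wordsBelow k hP)))
  exact .of_smul_coeffMap hT hconst (symbolVanishes_of_mem (d - (k + 2)) hmem
    (by exact_mod_cast hp (T + (k + 1)) (by omega) y hy) hderiv)
termination_by d.toNat

theorem eq_zero_of_mem_filtration (d : ℕ) {x : M} (hx : x ∈ p) (hd : x ∈ filtration E i d) :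
    x = 0 := by
  induction d with
  | zero => simpa [filtration_eq_bot E i le_rfl] using hd
  | succ d ih =>
    obtain ⟨P, hP, rfl⟩ := hd
    have hP' : P ∈ wordsBelow V (d + 1) := by exact_mod_cast hP
    have hsymbol := H.symbolVanishes_of_mem hT hp hi d hP' hx .rfl 1
    rw [coeffMap_one] at hsymbol
    exact ih hsymbol

theorem eq_bot_of_range_eval_eq_top (htop : LinearMap.range (eval E i) = ⊤) : p = ⊥ := by
  refine (Submodule.eq_bot_iff p).mpr fun x hx => ?_
  obtain ⟨P, rfl⟩ := LinearMap.range_eq_top.mp htop x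
  obtain ⟨d, hP⟩ := exists_mem_wordsBelow P
  exact H.eq_zero_of_mem_filtration hT hp hi d hx (eval_mem_filtration hP)

end IsTruncatedExtension

end Filtration

end NeveuSchwarz

section Representations

open NeveuSchwarz

/-- The operators of an `N`-module indexed by doubled degree. -/
noncomputable def NSRep.mode (M : NSRep) (n : ℤ) : Module.End ℂ M.carrier :=
  if Even n then M.L (n / 2) else M.G (n / 2 + 1)

theorem NSRep.mode_two_mul (M : NSRep) (m : ℤ) : M.mode (2 * m) = M.L m := by
  simp [NSRep.mode]

theorem NSRep.mode_two_mul_sub_one (M : NSRep) (j : ℤ) : M.mode (2 * j - 1) = M.G j := by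
  rw [NSRep.mode, if_neg (Int.not_even_iff_odd.mpr (by use j - 1; ring)),
    show (2 * j - 1) / 2 + 1 = j by omega]

theorem NSRep.satisfiesRelations_mode {M : NSRep} {ℓ : ℂ} (hM : M.HasCentralCharge ℓ) :
    SatisfiesRelations ℓ M.mode := by
  have hLG (m j : ℤ) : relator ℓ M.mode (2 * m) (2 * j - 1) = 0 := LinearMap.ext fun x => by
    simp only [relator_apply_even_odd, mode_two_mul, mode_two_mul_sub_one, M.rel_LG, sub_self,
      LinearMap.zero_apply]
  intro a b
  obtain ⟨m, rfl | rfl⟩ := exists_eq_two_mul_or_eq_two_mul_sub_one a <;>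
    obtain ⟨n, rfl | rfl⟩ := exists_eq_two_mul_or_eq_two_mul_sub_one b
  · refine LinearMap.ext fun x => ?_
    simp only [relator_apply_even_even, mode_two_mul, M.rel_LL, hM x, sub_self,
      LinearMap.zero_apply]
  · exact hLG m n
  · rw [relator_swap, hLG, smul_zero]
  · refine LinearMap.ext fun x => ?_
    simp only [relator_apply_odd_odd, mode_two_mul, mode_two_mul_sub_one, M.rel_GG, hM x, sub_self,
      LinearMap.zero_apply]

/-- The `N`-module given by operators indexed by doubled degree. -/
noncomputable def NSRep.ofModes {M : Type} [AddCommGroup M] [Module ℂ M] {ℓ : ℂ}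
    {E : ℤ → Module.End ℂ M} (hE : SatisfiesRelations ℓ E) : NSRep where
  carrier := M
  L m := E (2 * m)
  G j := E (2 * j - 1)
  C := ℓ • LinearMap.id
  commC_L m v := ((E (2 * m)).map_smul ℓ v).symm
  commC_G j v := ((E (2 * j - 1)).map_smul ℓ v).symm
  rel_LL m n v := by
    have h := relator_apply_even_even ℓ E m n v
    rw [hE] at h
    exact sub_eq_zero.mp h.symm
  rel_LG m j v := by
    have h := relator_apply_even_odd ℓ E m j v
    rw [hE] at h
    exact sub_eq_zero.mp h.symm
  rel_GG j k v := by
    have h := relator_apply_odd_odd ℓ E j k v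
    rw [hE] at h
    exact sub_eq_zero.mp h.symm

theorem NSRep.mode_ofModes {M : Type} [AddCommGroup M] [Module ℂ M] {ℓ : ℂ}
    {E : ℤ → Module.End ℂ M} (hE : SatisfiesRelations ℓ E) (n : ℤ) :
    (NSRep.ofModes hE).mode n = E n := by
  obtain ⟨m, rfl | rfl⟩ := exists_eq_two_mul_or_eq_two_mul_sub_one n
  exacts [NSRep.mode_two_mul _ m, NSRep.mode_two_mul_sub_one _ m]

/-- The restriction of an `N`-module to an invariant subspace. -/
noncomputable def NSRep.restrict (M : NSRep) (p : Submodule ℂ M.carrier) (hp : M.Invariant p) :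
    NSRep where
  carrier := p
  L m := (M.L m).restrict (hp.1 m)
  G j := (M.G j).restrict (hp.2.1 j)
  C := M.C.restrict hp.2.2
  commC_L m v := Subtype.ext (M.commC_L m v)
  commC_G j v := Subtype.ext (M.commC_G j v)
  rel_LL m n v := Subtype.ext (M.rel_LL m n v)
  rel_LG m j v := Subtype.ext (M.rel_LG m j v)
  rel_GG j k v := Subtype.ext (M.rel_GG j k v)

/-- The operators of a `b`-module indexed by doubled degree. -/
noncomputable def BRep.mode (V : BRep) (n : ℕ) : Module.End ℂ V.carrier :=
  if Even n then V.L (n / 2) else V.G (n / 2)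

theorem BRep.mode_two_mul (V : BRep) (m : ℕ) : V.mode (2 * m) = V.L m := by
  simp [BRep.mode]

theorem BRep.mode_two_mul_add_one (V : BRep) (j : ℕ) : V.mode (2 * j + 1) = V.G j := by
  rw [BRep.mode, if_neg (by simp), show (2 * j + 1) / 2 = j by omega]

theorem BRep.satisfiesNonnegRelations_mode (V : BRep) : SatisfiesNonnegRelations V.mode := by
  intro a b
  refine LinearMap.ext fun v => ?_
  simp only [LinearMap.add_apply, LinearMap.smul_apply, Module.End.mul_apply]
  rcases a.even_or_odd' with ⟨m, rfl | rfl⟩ <;> rcases b.even_or_odd' with ⟨n, rfl | rfl⟩ <;>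
    simp only [koszulSign, structConst, Int.even_coe_nat, even_two_mul,
      Nat.not_even_two_mul_add_one, if_true, if_false, true_or, or_true, or_self, mode_two_mul,
      mode_two_mul_add_one] <;>
    push_cast
  · rw [← mul_add, mode_two_mul]
    linear_combination (norm := module) V.rel_LL m n v
  · rw [show 2 * m + (2 * n + 1) = 2 * (m + n) + 1 by ring, mode_two_mul_add_one]
    linear_combination (norm := module) V.rel_LG m n v
  · rw [show 2 * m + 1 + 2 * n = 2 * (n + m) + 1 by ring, mode_two_mul_add_one]
    linear_combination (norm := module) -V.rel_LG n m v
  · rw [show 2 * m + 1 + (2 * n + 1) = 2 * (m + n + 1) by ring, mode_two_mul]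
    linear_combination (norm := module) V.rel_GG m n v

theorem isBLinear_iff_mode {V : BRep} {M : NSRep} {f : V.carrier →ₗ[ℂ] M.carrier} :
    IsBLinear V M f ↔ ∀ (n : ℕ) (v : V.carrier), f (V.mode n v) = M.mode n (f v) := by
  have hL (m : ℕ) : M.mode (2 * m : ℕ) = M.L m := by exact_mod_cast M.mode_two_mul m
  have hG (j : ℕ) : M.mode (2 * j + 1 : ℕ) = M.G (j + 1) := by
    rw [← M.mode_two_mul_sub_one]
    congr 1
    push_cast
    ring
  refine ⟨fun hf n v => ?_, fun hf => ⟨fun m v => ?_, fun j v => ?_⟩⟩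
  · rcases n.even_or_odd' with ⟨m, rfl | rfl⟩
    · rw [V.mode_two_mul, hL, hf.1]
    · rw [V.mode_two_mul_add_one, hG, hf.2]
  · rw [← V.mode_two_mul, hf, hL]
  · rw [← V.mode_two_mul_add_one, hf, hG]

theorem NSRep.Invariant.mode_mem {M : NSRep} {p : Submodule ℂ M.carrier} (hp : M.Invariant p)
    (n : ℤ) {x : M.carrier} (hx : x ∈ p) : M.mode n x ∈ p := by
  unfold NSRep.mode
  split_ifs
  exacts [hp.1 _ x hx, hp.2.1 _ x hx]

theorem NSRep.invariant_of_mode_mem {M : NSRep} {ℓ : ℂ} (hM : M.HasCentralCharge ℓ)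
    {p : Submodule ℂ M.carrier} (hp : ∀ n, ∀ x ∈ p, M.mode n x ∈ p) : M.Invariant p := by
  refine ⟨fun m x hx => ?_, fun j x hx => ?_, fun x hx => ?_⟩
  · simpa only [M.mode_two_mul] using hp (2 * m) x hx
  · simpa only [M.mode_two_mul_sub_one] using hp (2 * j - 1) x hx
  · simpa only [hM x] using p.smul_mem ℓ hx

theorem NSRep.Invariant.comap {V : BRep} {M : NSRep} {p : Submodule ℂ M.carrier}
    (hp : M.Invariant p) {f : V.carrier →ₗ[ℂ] M.carrier} (hf : IsBLinear V M f) :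
    V.Invariant (p.comap f) := by
  refine ⟨fun m v hv => ?_, fun j v hv => ?_⟩
  · simpa only [Submodule.mem_comap, hf.1] using hp.1 m _ hv
  · simpa only [Submodule.mem_comap, hf.2] using hp.2.1 (j + 1) _ hv

theorem exists_injective_isBLinear (ℓ : ℂ) (V : BRep) :
    ∃ W : NSRep, W.HasCentralCharge ℓ ∧
      ∃ f : V.carrier →ₗ[ℂ] W.carrier, IsBLinear V W f ∧ Function.Injective f := by
  have he := V.satisfiesNonnegRelations_mode
  refine ⟨.ofModes (satisfiesRelations_inducedMode ℓ he), fun _ => rfl, inducedMap ℓ V.mode,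
    isBLinear_iff_mode.mpr fun n v => ?_, inducedMap_injective ℓ he⟩
  rw [NSRep.mode_ofModes]
  exact (inducedMode_natCast_inducedMap ℓ he n v).symm

namespace IsInduced

variable {ℓ : ℂ} {V : BRep} {M : NSRep} {ι : V.carrier →ₗ[ℂ] M.carrier}

theorem injective (h : IsInduced ℓ V M ι) : Function.Injective ι := by
  obtain ⟨W, hW, f, hf, hinj⟩ := exists_injective_isBLinear ℓ V
  obtain ⟨F, ⟨-, rfl⟩, -⟩ := h.2.2 W hW f hf
  exact Function.Injective.of_comp hinj

theorem eq_top_of_invariant (h : IsInduced ℓ V M ι) {p : Submodule ℂ M.carrier}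
    (hp : M.Invariant p) (hι : ∀ v, ι v ∈ p) : p = ⊤ := by
  obtain ⟨hb, hℓ, huniv⟩ := h
  obtain ⟨F, ⟨hF, hFι⟩, -⟩ := huniv (M.restrict p hp) (fun x => Subtype.ext (hℓ x.1))
    (ι.codRestrict p hι) ⟨fun m v => Subtype.ext (hb.1 m v), fun j v => Subtype.ext (hb.2 j v)⟩
  have hid : p.subtype ∘ₗ F = LinearMap.id := (huniv M hℓ ι hb).unique
    ⟨⟨fun m x => congr(($(hF.1 m x)).1), fun j x => congr(($(hF.2.1 j x)).1),
      fun x => congr(($(hF.2.2 x)).1)⟩, LinearMap.ext fun v => congr(($hFι v).1)⟩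
    ⟨⟨fun _ _ => rfl, fun _ _ => rfl, fun _ => rfl⟩, rfl⟩
  refine eq_top_iff.mpr fun x _ => ?_
  rw [← LinearMap.id_apply (R := ℂ) x, ← hid]
  exact (F x).2

end IsInduced

theorem BRep.G_eq_zero_of_lt {V : BRep} {t : ℕ} (ht : 0 < t)
    (hL : ∀ i, t < i → ∀ v, V.L i v = 0) {j : ℕ} (hj : t < j) (v : V.carrier) : V.G j v = 0 := by
  have h := V.rel_LG j 0 v
  rw [hL j hj, hL j hj, map_zero, sub_zero, add_zero] at h
  refine (smul_eq_zero.mp h.symm).resolve_left ?_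
  have hj1 : (j : ℂ) ≠ 1 := by exact_mod_cast (by omega : j ≠ 1)
  simpa [sub_eq_zero] using hj1

theorem BRep.IsSimple.G_eq_zero {V : BRep} (hV : V.IsSimple) {t : ℕ}
    (hL : ∀ i, t < i → ∀ v, V.L i v = 0) (hG : ∀ j, t < j → ∀ v, V.G j v = 0) (v : V.carrier) :
    V.G t v = 0 := by
  have hker : V.Invariant (LinearMap.ker (V.G t)) := by
    refine ⟨fun m v hv => ?_, fun j v hv => ?_⟩ <;> rw [LinearMap.mem_ker] at hv ⊢
    · have hmt : V.G (m + t) v = 0 := by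
        rcases m.eq_zero_or_pos with rfl | hm
        exacts [by rwa [zero_add], hG _ (by omega) v]
      simpa [hv, hmt] using V.rel_LG m t v
    · simpa [hv, hL (t + j + 1) (by omega)] using V.rel_GG t j v
  rcases hV.2 _ hker with hbot | htop
  · have hsq : (2 : ℂ) • V.G t (V.G t v) = 0 := by
      rw [two_smul, V.rel_GG, hL _ (by omega), smul_zero]
    exact LinearMap.ker_eq_bot'.mp hbot _ ((smul_eq_zero.mp hsq).resolve_left two_ne_zero)
  · exact LinearMap.mem_ker.mp (htop ▸ Submodule.mem_top)

theorem BRep.IsSimple.mode_eq_zero {V : BRep} (hV : V.IsSimple) {t : ℕ} (ht : 0 < t)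
    (hL : ∀ i, t < i → ∀ v, V.L i v = 0) {n : ℕ} (hn : 2 * t < n) : V.mode n = 0 := by
  have hG := fun j => BRep.G_eq_zero_of_lt ht hL (j := j)
  refine LinearMap.ext fun v => ?_
  rcases n.even_or_odd' with ⟨m, rfl | rfl⟩
  · rw [V.mode_two_mul, hL m (by omega), LinearMap.zero_apply]
  · rw [V.mode_two_mul_add_one, LinearMap.zero_apply]
    rcases (by omega : t ≤ m).eq_or_lt with rfl | hm
    exacts [hV.G_eq_zero hL hG v, hG m hm v]

theorem IsInduced.isTruncatedExtension {ℓ : ℂ} {V : BRep} {M : NSRep}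
    {ι : V.carrier →ₗ[ℂ] M.carrier} (h : IsInduced ℓ V M ι) (hV : V.IsSimple) {t : ℕ} (ht : 0 < t)
    (hL : ∀ i, t < i → ∀ v, V.L i v = 0) : IsTruncatedExtension ℓ (2 * t) M.mode ι V.mode where
  relations := NSRep.satisfiesRelations_mode h.2.1
  map_mode n v := (isBLinear_iff_mode.mp h.1 n v).symm
  mode_eq_zero _ hn := hV.mode_eq_zero ht hL hn
  even := even_two_mul t
  two_le := by omega

theorem IsInduced.range_eval_eq_top {ℓ : ℂ} {V : BRep} {M : NSRep}
    {ι : V.carrier →ₗ[ℂ] M.carrier} (h : IsInduced ℓ V M ι) {T : ℕ}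
    {e : ℕ → Module.End ℂ V.carrier} (H : IsTruncatedExtension ℓ T M.mode ι e) :
    LinearMap.range (eval M.mode ι) = ⊤ :=
  h.eq_top_of_invariant
    (NSRep.invariant_of_mode_mem h.2.1 fun n _ hx => H.mode_mem_range_eval n hx)
    fun v => ⟨_, eval_single_nil M.mode ι v⟩

end Representations

/-- Let `V` be a simple `b`-module such that for some `t ∈ ℤ_+` the action
of `L_t` on `V` is injective and `L_i V = 0` for all `i > t`. Then for every `ℓ ∈ ℂ` the
induced module `Ind_ℓ(V)` is a simple module over the Neveu–Schwarz algebra. -/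
theorem induced_module_simple
    (V : BRep) (hV : V.IsSimple) (t : ℕ) (ht : 0 < t)
    (hinj : Function.Injective (V.L t))
    (hvan : ∀ i : ℕ, t < i → ∀ v : V.carrier, V.L i v = 0) :
    ∀ (ℓ : ℂ) (M : NSRep) (ι : V.carrier →ₗ[ℂ] M.carrier),
      IsInduced ℓ V M ι → M.IsSimple := by
  intro ℓ M ι hI
  have hext := hI.isTruncatedExtension hV ht hvan
  have hinj' : Function.Injective (V.mode (2 * t)) := by rwa [V.mode_two_mul]
  obtain ⟨v₀, hv₀⟩ := hV.1
  refine ⟨⟨ι v₀, (map_ne_zero_iff ι hI.injective).mpr hv₀⟩, fun p hp => ?_⟩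
  rcases hV.2 _ (hp.comap hI.1) with hbot | htop
  · have hdisj : ∀ v, ι v ∈ p → v = 0 := fun v hv => (Submodule.mem_bot ℂ).mp (hbot ▸ hv)
    exact .inl (hext.eq_bot_of_range_eval_eq_top hinj' (fun n _ _ hx => hp.mode_mem n hx) hdisj
      (hI.range_eval_eq_top hext))
  · have hcontains : ∀ v, ι v ∈ p := fun v => Submodule.mem_comap.mp (htop ▸ Submodule.mem_top)
    exact .inr (hI.eq_top_of_invariant hp hcontains)
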